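/- There exists an absolute constant C such that for every finite irreducible reversible Markov chain (Ω,P,π), every probability measure μ on Ω, every real t ≥ 2 and every s with 2 ≤ s ≤ e^t: d_L(t + ⌈s√t⌉, μ) ≤ d_c(t/2, μ) + C · s^{−1} √(log s). -/

import Mathlib

open Matrix Filter Asymptotics

/-- `P` is a stochastic matrix. -/
def IsStochastic {Ω : Type*} [Fintype Ω] (P : Matrix Ω Ω ℝ) : Prop :=
  (∀ x y, 0 ≤ P x y) ∧ ∀ x, ∑ y, P x y = 1

/-- `P` is irreducible. -/
def IsIrreducibleMatrix {Ω : Type*} [Fintype Ω] [DecidableEq Ω] (P : Matrix Ω Ω ℝ) : Prop :=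
  ∀ x y, ∃ n : ℕ, 0 < (P ^ n) x y

/-- `μ` is a probability vector. -/
def IsProbVec {Ω : Type*} [Fintype Ω] (μ : Ω → ℝ) : Prop :=
  (∀ x, 0 ≤ μ x) ∧ ∑ x, μ x = 1

/-- The chain `(P, pi)` is reversible. -/
def IsReversible {Ω : Type*} [Fintype Ω] (P : Matrix Ω Ω ℝ) (pi : Ω → ℝ) : Prop :=
  ∀ x y, pi x * P x y = pi y * P y x

/-- A finite irreducible Markov chain `P` with stationary distribution `pi`. -/
def IsMC {Ω : Type*} [Fintype Ω] [DecidableEq Ω] (P : Matrix Ω Ω ℝ) (pi : Ω → ℝ) : Prop :=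
  IsStochastic P ∧ IsIrreducibleMatrix P ∧ IsProbVec pi ∧ pi ᵥ* P = pi

/-- A finite irreducible reversible Markov chain `P` with stationary distribution `pi`. -/
def IsRevMC {Ω : Type*} [Fintype Ω] [DecidableEq Ω] (P : Matrix Ω Ω ℝ) (pi : Ω → ℝ) : Prop :=
  IsMC P pi ∧ IsReversible P pi

/-- Total-variation distance between two measures on a finite set. -/
noncomputable def tvDist {Ω : Type*} [Fintype Ω] (μ ν : Ω → ℝ) : ℝ :=
  (∑ x, |μ x - ν x|) / 2

/-- The lazy version `(I + P)/2` of `P`. -/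
noncomputable def lazyM {Ω : Type*} [Fintype Ω] [DecidableEq Ω] (P : Matrix Ω Ω ℝ) :
    Matrix Ω Ω ℝ :=
  (2 : ℝ)⁻¹ • (1 + P)

/-- `d_c(t, μ)`: TV distance from stationarity of the continuous-time chain at time `t`,
started from `μ`. -/
noncomputable def contDist {Ω : Type*} [Fintype Ω] [DecidableEq Ω] (P : Matrix Ω Ω ℝ) (pi : Ω → ℝ)
    (t : ℝ) (μ : Ω → ℝ) : ℝ :=
  tvDist (fun y => ∑' k : ℕ, Real.exp (-t) * t ^ k / (Nat.factorial k) * (μ ᵥ* (P ^ k)) y) pi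

/-- `d_L(t, μ)`: TV distance from stationarity of the lazy chain at (discrete) time `t`,
started from `μ`. -/
noncomputable def lazyDist {Ω : Type*} [Fintype Ω] [DecidableEq Ω] (P : Matrix Ω Ω ℝ)
    (pi : Ω → ℝ) (t : ℝ) (μ : Ω → ℝ) : ℝ :=
  tvDist (μ ᵥ* (lazyM P ^ ⌊t⌋₊)) pi

/-- `d_ave(t, μ)`: TV distance from stationarity of the averaged chain at (discrete) time `t`,
started from `μ`. -/
noncomputable def aveDist {Ω : Type*} [Fintype Ω] [DecidableEq Ω] (P : Matrix Ω Ω ℝ) (pi : Ω → ℝ)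
    (t : ℝ) (μ : Ω → ℝ) : ℝ :=
  tvDist (fun y => ((μ ᵥ* (P ^ ⌊t⌋₊)) y + (μ ᵥ* (P ^ (⌊t⌋₊ + 1))) y) / 2) pi

/-- The point mass at `x`. -/
noncomputable def deltaMass {Ω : Type*} [DecidableEq Ω] (x : Ω) : Ω → ℝ :=
  fun y => if y = x then 1 else 0

/-- Worst-case continuous-time distance `d_c(t)`. -/
noncomputable def contDistMax {Ω : Type*} [Fintype Ω] [DecidableEq Ω] (P : Matrix Ω Ω ℝ)
    (pi : Ω → ℝ) (t : ℝ) : ℝ :=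
  ⨆ x : Ω, contDist P pi t (deltaMass x)

/-- Worst-case lazy distance `d_L(t)`. -/
noncomputable def lazyDistMax {Ω : Type*} [Fintype Ω] [DecidableEq Ω] (P : Matrix Ω Ω ℝ)
    (pi : Ω → ℝ) (t : ℝ) : ℝ :=
  ⨆ x : Ω, lazyDist P pi t (deltaMass x)

/-- Worst-case averaged distance `d_ave(t)`. -/
noncomputable def aveDistMax {Ω : Type*} [Fintype Ω] [DecidableEq Ω] (P : Matrix Ω Ω ℝ)
    (pi : Ω → ℝ) (t : ℝ) : ℝ :=
  ⨆ x : Ω, aveDist P pi t (deltaMass x)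

/-- `φ_{α,C}(t) = t + ⌈C t^{(1+2α)/2} √(α log t)⌉`. -/
noncomputable def phiAC (α C t : ℝ) : ℝ :=
  t + ((⌈C * t ^ ((1 + 2 * α) / 2) * Real.sqrt (α * Real.log t)⌉ : ℤ) : ℝ)

/-- `ψ_{α,C}(x) = min (1, x + C |log(2x)|^{-α})`. -/
noncomputable def psiAC (α C x : ℝ) : ℝ :=
  min 1 (x + C * |Real.log (2 * x)| ^ (-α))

/-- `t_c(ε)`, the `ε`-mixing time of the continuous-time chain. -/
noncomputable def contMix {Ω : Type*} [Fintype Ω] [DecidableEq Ω] (P : Matrix Ω Ω ℝ)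
    (pi : Ω → ℝ) (ε : ℝ) : ℝ :=
  sInf {t : ℝ | 0 ≤ t ∧ contDistMax P pi t ≤ ε}

/-- `t_L(ε)`, the `ε`-mixing time of the lazy chain. -/
noncomputable def lazyMix {Ω : Type*} [Fintype Ω] [DecidableEq Ω] (P : Matrix Ω Ω ℝ)
    (pi : Ω → ℝ) (ε : ℝ) : ℕ :=
  sInf {t : ℕ | lazyDistMax P pi t ≤ ε}

/-- `t_ave(ε)`, the `ε`-mixing time of the averaged chain. -/
noncomputable def aveMix {Ω : Type*} [Fintype Ω] [DecidableEq Ω] (P : Matrix Ω Ω ℝ)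
    (pi : Ω → ℝ) (ε : ℝ) : ℕ :=
  sInf {t : ℕ | aveDistMax P pi t ≤ ε}


section Helpers

variable {Ω : Type*} [Fintype Ω] [DecidableEq Ω]

/-- weighted inner product -/
def wip (pi f g : Ω → ℝ) : ℝ := ∑ x, pi x * (f x * g x)

theorem wip_comm (pi f g : Ω → ℝ) : wip pi f g = wip pi g f := by
  unfold wip; exact Finset.sum_congr rfl fun x _ => by ring

theorem wip_add (pi f g h : Ω → ℝ) : wip pi f (g + h) = wip pi f g + wip pi f h := by
  unfold wip; rw [← Finset.sum_add_distrib]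
  exact Finset.sum_congr rfl fun x _ => by simp only [Pi.add_apply]; ring

theorem wip_sub (pi f g h : Ω → ℝ) : wip pi f (g - h) = wip pi f g - wip pi f h := by
  unfold wip; rw [← Finset.sum_sub_distrib]
  exact Finset.sum_congr rfl fun x _ => by simp only [Pi.sub_apply]; ring

theorem wip_smul (pi f g : Ω → ℝ) (c : ℝ) : wip pi f (c • g) = c * wip pi f g := by
  unfold wip; rw [Finset.mul_sum]
  exact Finset.sum_congr rfl fun x _ => by simp only [Pi.smul_apply, smul_eq_mul]; ring

theorem wip_symm {M : Matrix Ω Ω ℝ} {pi : Ω → ℝ} (h : IsReversible M pi) (f g : Ω → ℝ) :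
    wip pi f (M *ᵥ g) = wip pi (M *ᵥ f) g := by
  unfold wip
  simp only [Matrix.mulVec, dotProduct, Finset.mul_sum, Finset.sum_mul]
  rw [Finset.sum_comm]
  refine Finset.sum_congr rfl fun x _ => Finset.sum_congr rfl fun y _ => ?_
  have := h x y
  linear_combination (-(f y * g x)) * this

theorem wip_double {M : Matrix Ω Ω ℝ} {pi : Ω → ℝ} (hM : IsStochastic M)
    (h : IsReversible M pi) (f : Ω → ℝ) (e : ℝ) (he : e * e = 1) :
    ∑ x, ∑ y, pi x * M x y * (f x + e * f y) ^ 2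
      = 2 * wip pi f f + 2 * e * wip pi f (M *ᵥ f) := by
  have h1 : ∑ x, ∑ y, pi x * M x y * (f x * f x) = wip pi f f := by
    unfold wip
    refine Finset.sum_congr rfl fun x _ => ?_
    rw [← Finset.sum_mul, ← Finset.mul_sum, hM.2 x, mul_one]
  have h2 : ∑ x, ∑ y, pi x * M x y * (f y * f y) = wip pi f f := by
    rw [← h1, Finset.sum_comm]
    refine Finset.sum_congr rfl fun x _ => Finset.sum_congr rfl fun y _ => ?_
    rw [h y x]
  have h3 : ∑ x, ∑ y, pi x * M x y * (f x * f y) = wip pi f (M *ᵥ f) := by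
    unfold wip
    simp only [Matrix.mulVec, dotProduct, Finset.mul_sum]
    refine Finset.sum_congr rfl fun x _ => Finset.sum_congr rfl fun y _ => ?_
    ring
  have h4 : ∑ x, ∑ y, pi x * M x y * (f x + e * f y) ^ 2
      = ∑ x, ∑ y, pi x * M x y * (f x * f x) + ∑ x, ∑ y, pi x * M x y * (f y * f y)
        + 2 * e * ∑ x, ∑ y, pi x * M x y * (f x * f y) := by
    simp only [Finset.mul_sum, ← Finset.sum_add_distrib]
    refine Finset.sum_congr rfl fun x _ => Finset.sum_congr rfl fun y _ => ?_
    linear_combination (pi x * M x y * f y ^ 2) * he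
  rw [h4, h1, h2, h3]; ring

theorem wip_bounds {M : Matrix Ω Ω ℝ} {pi : Ω → ℝ} (hM : IsStochastic M)
    (h : IsReversible M pi) (hpi : ∀ x, 0 ≤ pi x) (f : Ω → ℝ) :
    wip pi f (M *ᵥ f) ≤ wip pi f f ∧ - wip pi f f ≤ wip pi f (M *ᵥ f) := by
  have key : ∀ e : ℝ, 0 ≤ ∑ x, ∑ y, pi x * M x y * (f x + e * f y) ^ 2 := fun e =>
    Finset.sum_nonneg fun x _ => Finset.sum_nonneg fun y _ =>
      mul_nonneg (mul_nonneg (hpi x) (hM.1 x y)) (sq_nonneg _)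
  have a := key 1
  have b := key (-1)
  rw [wip_double hM h f _ (by norm_num)] at a b
  constructor <;> linarith

theorem stoch_mul {A B : Matrix Ω Ω ℝ} (hA : IsStochastic A) (hB : IsStochastic B) :
    IsStochastic (A * B) := by
  refine ⟨fun x y => ?_, fun x => ?_⟩
  · rw [Matrix.mul_apply]
    exact Finset.sum_nonneg fun z _ => mul_nonneg (hA.1 _ _) (hB.1 _ _)
  · simp only [Matrix.mul_apply]
    rw [Finset.sum_comm]
    simp only [← Finset.mul_sum, hB.2, mul_one, hA.2]

theorem stoch_one : IsStochastic (1 : Matrix Ω Ω ℝ) := by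
  refine ⟨fun x y => ?_, fun x => ?_⟩
  · rw [Matrix.one_apply]; split_ifs <;> norm_num
  · simp [Matrix.one_apply]

theorem stoch_pow {A : Matrix Ω Ω ℝ} (hA : IsStochastic A) (n : ℕ) : IsStochastic (A ^ n) := by
  induction n with
  | zero => simpa using stoch_one
  | succ n ih => rw [pow_succ]; exact stoch_mul ih hA

theorem rev_sq {A : Matrix Ω Ω ℝ} {pi : Ω → ℝ} (h : IsReversible A pi) :
    IsReversible (A * A) pi := by
  intro x y
  simp only [Matrix.mul_apply, Finset.mul_sum]
  refine Finset.sum_congr rfl fun z _ => ?_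
  linear_combination A z y * h x z + A z x * h z y

theorem stoch_lazy {P : Matrix Ω Ω ℝ} (hP : IsStochastic P) : IsStochastic (lazyM P) := by
  refine ⟨fun x y => ?_, fun x => ?_⟩
  · have := hP.1 x y
    have := (stoch_one (Ω := Ω)).1 x y
    simp only [lazyM, Matrix.smul_apply, Matrix.add_apply, smul_eq_mul]; linarith
  · simp only [lazyM, Matrix.smul_apply, Matrix.add_apply, smul_eq_mul, ← Finset.mul_sum,
      Finset.sum_add_distrib, hP.2, stoch_one.2]
    norm_num

theorem rev_lazy {P : Matrix Ω Ω ℝ} {pi : Ω → ℝ} (h : IsReversible P pi) :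
    IsReversible (lazyM P) pi := by
  intro x y
  have := h x y
  simp only [lazyM, Matrix.smul_apply, Matrix.add_apply, smul_eq_mul, Matrix.one_apply]
  by_cases hxy : x = y
  · subst hxy; rfl
  · rw [if_neg hxy, if_neg (Ne.symm hxy)]; linear_combination (1/2) * this

/-- positivity of `Q`, `1 - Q`, `Q (1 - Q)` for the lazy matrix `Q`. -/
theorem lazy_pos {P : Matrix Ω Ω ℝ} {pi : Ω → ℝ} (hP : IsStochastic P)
    (h : IsReversible P pi) (hpi : ∀ x, 0 ≤ pi x) (f : Ω → ℝ) :
    0 ≤ wip pi f (lazyM P *ᵥ f) ∧ wip pi f (lazyM P *ᵥ f) ≤ wip pi f f ∧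
      wip pi f (lazyM P *ᵥ (lazyM P *ᵥ f)) ≤ wip pi f (lazyM P *ᵥ f) := by
  have e1 : lazyM P *ᵥ f = (2:ℝ)⁻¹ • (f + P *ᵥ f) := by
    rw [lazyM, Matrix.smul_mulVec, Matrix.add_mulVec, Matrix.one_mulVec]
  have e2 : lazyM P *ᵥ (lazyM P *ᵥ f)
      = (4:ℝ)⁻¹ • (f + ((P *ᵥ f) + (P *ᵥ f)) + (P * P) *ᵥ f) := by
    rw [e1, Matrix.mulVec_smul, Matrix.mulVec_add, e1, lazyM, Matrix.smul_mulVec,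
      Matrix.add_mulVec, Matrix.one_mulVec, Matrix.mulVec_mulVec]
    ext x
    simp only [Pi.smul_apply, Pi.add_apply, smul_eq_mul]; ring
  obtain ⟨a1, a2⟩ := wip_bounds hP h hpi f
  obtain ⟨b1, b2⟩ := wip_bounds (stoch_mul hP hP) (rev_sq h) hpi f
  rw [e2, e1]
  simp only [wip_smul, wip_add]
  refine ⟨?_, ?_, ?_⟩ <;> linarith

theorem seq_bound (b : ℕ → ℝ) (h0 : ∀ n, 0 ≤ b n) (h1 : ∀ n, b (n+1) ≤ b n)
    (h3 : ∀ n, b (n+1) - 2 * b (n+2) + b (n+3) ≤ b n - 2 * b (n+1) + b (n+2)) (n : ℕ) :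
    (b n - 2 * b (n+1) + b (n+2)) * ((n+1) * (n+2) / 2) ≤ b 0 := by
  have hs : ∀ N : ℕ, ∑ i ∈ Finset.range N, ((i:ℝ)+1) * (b i - 2 * b (i+1) + b (i+2))
      = b 0 - b N - N * (b N - b (N+1)) := by
    intro N
    induction N with
    | zero => simp
    | succ N ih => rw [Finset.sum_range_succ, ih]; push_cast; ring
  have hanti : Antitone fun i => b i - 2 * b (i+1) + b (i+2) :=
    antitone_nat_of_succ_le fun i => h3 i
  have hg : ∀ N : ℕ, ∑ i ∈ Finset.range N, ((i:ℝ)+1) = N * (N+1) / 2 := by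
    intro N
    induction N with
    | zero => simp
    | succ N ih => rw [Finset.sum_range_succ, ih]; push_cast; ring
  have h4 : ∑ i ∈ Finset.range (n+1), ((i:ℝ)+1) * (b n - 2 * b (n+1) + b (n+2))
      ≤ ∑ i ∈ Finset.range (n+1), ((i:ℝ)+1) * (b i - 2 * b (i+1) + b (i+2)) := by
    refine Finset.sum_le_sum fun i hi => mul_le_mul_of_nonneg_left ?_ (by positivity)
    exact hanti (by have := Finset.mem_range.1 hi; omega)
  rw [← Finset.sum_mul, hg, hs] at h4
  have h5 : 0 ≤ ((n+1 : ℕ):ℝ) * (b (n+1) - b (n+1+1)) :=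
    mul_nonneg (by positivity) (by linarith [h1 (n+1)])
  have := h0 (n+1)
  push_cast at h4 h5
  nlinarith

theorem wip_pow {Q : Matrix Ω Ω ℝ} {pi : Ω → ℝ} (h : IsReversible Q pi) (f : Ω → ℝ) (i j : ℕ) :
    wip pi ((Q ^ i) *ᵥ f) ((Q ^ j) *ᵥ f) = wip pi f ((Q ^ (i + j)) *ᵥ f) := by
  induction i generalizing j with
  | zero => simp
  | succ i ih =>
    rw [pow_succ', ← Matrix.mulVec_mulVec, ← wip_symm h, Matrix.mulVec_mulVec, ← pow_succ', ih]
    congr 3; omega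

theorem l2_bound {P : Matrix Ω Ω ℝ} {pi : Ω → ℝ} (hP : IsStochastic P)
    (h : IsReversible P pi) (hpi : ∀ x, 0 ≤ pi x) (f : Ω → ℝ) (j : ℕ)
    (u : Ω → ℝ) (hu : u = (lazyM P ^ j) *ᵥ f - (lazyM P ^ (j+1)) *ᵥ f) :
    wip pi u u * ((j+1)^2) ≤ wip pi f f := by
  set Q := lazyM P with hQ
  have hr : IsReversible Q pi := rev_lazy h
  have hsub : ∀ f g k : Ω → ℝ, wip pi (f - g) k = wip pi f k - wip pi g k := by
    intro f g k; rw [wip_comm, wip_sub, wip_comm pi k f, wip_comm pi k g]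
  have hpp : ∀ n, Q *ᵥ ((Q^n) *ᵥ f) = (Q^(n+1)) *ᵥ f := fun n => by
    rw [Matrix.mulVec_mulVec, ← pow_succ']
  set b : ℕ → ℝ := fun n => wip pi f ((Q ^ n) *ᵥ f) with hb
  have hpar : ∀ n : ℕ, ∃ k, n = k + k ∨ n = k + k + 1 := fun n => ⟨n / 2, by omega⟩
  have h0 : ∀ n, 0 ≤ b n := by
    intro n
    obtain ⟨k, rfl | rfl⟩ := hpar n
    · simp only [hb]; rw [← wip_pow hr]
      exact Finset.sum_nonneg fun x _ => mul_nonneg (hpi x) (mul_self_nonneg _)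
    · have := (lazy_pos hP h hpi ((Q^k) *ᵥ f)).1
      rwa [← hQ, hpp, wip_pow hr, ← add_assoc] at this
  have h1 : ∀ n, b (n+1) ≤ b n := by
    intro n
    obtain ⟨k, rfl | rfl⟩ := hpar n
    · have := (lazy_pos hP h hpi ((Q^k) *ᵥ f)).2.1
      rwa [← hQ, hpp, wip_pow hr, wip_pow hr, ← add_assoc] at this
    · have := (lazy_pos hP h hpi ((Q^k) *ᵥ f)).2.2
      rwa [← hQ, hpp, hpp, wip_pow hr, wip_pow hr, ← add_assoc, ← add_assoc] at this
  have hE : ∀ i j : ℕ, wip pi ((Q ^ i) *ᵥ f) ((Q ^ j) *ᵥ f) = b (i + j) := fun i j => wip_pow hr f i j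
  have h3 : ∀ n, b (n+1) - 2 * b (n+2) + b (n+3) ≤ b n - 2 * b (n+1) + b (n+2) := by
    intro n
    obtain ⟨k, rfl | rfl⟩ := hpar n
    · have := (lazy_pos hP h hpi ((Q^k) *ᵥ f - (Q^(k+1)) *ᵥ f)).2.1
      rw [← hQ] at this
      simp only [Matrix.mulVec_sub, hpp, wip_sub, hsub, hE] at this
      ring_nf at this ⊢
      linarith
    · have := (lazy_pos hP h hpi ((Q^k) *ᵥ f - (Q^(k+1)) *ᵥ f)).2.2
      rw [← hQ] at this
      simp only [Matrix.mulVec_sub, hpp, wip_sub, hsub, hE] at this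
      ring_nf at this ⊢
      linarith
  have hu2 : wip pi u u = b (2*j) - 2 * b (2*j+1) + b (2*j+2) := by
    rw [hu]; simp only [wip_sub, hsub, hE]; ring_nf
  have hf : wip pi f f = b 0 := by simp [hb]
  have hsb := seq_bound b h0 h1 h3 (2*j)
  rw [hf]
  refine le_trans ?_ hsb
  rw [← hu2]
  have hn : 0 ≤ wip pi u u :=
    Finset.sum_nonneg fun x _ => mul_nonneg (hpi x) (mul_self_nonneg _)
  refine mul_le_mul_of_nonneg_left ?_ hn
  push_cast
  have : (0:ℝ) ≤ j := by positivity
  nlinarith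

theorem l1_bound {P : Matrix Ω Ω ℝ} {pi : Ω → ℝ} (hP : IsStochastic P)
    (h : IsReversible P pi) (hpi : IsProbVec pi) (f : Ω → ℝ) (hf : ∀ x, 0 ≤ f x ∧ f x ≤ 1)
    (j : ℕ) :
    ∑ x, pi x * |((lazyM P ^ j) *ᵥ f) x - ((lazyM P ^ (j+1)) *ᵥ f) x| ≤ 1 / (j + 1) := by
  set u := (lazyM P ^ j) *ᵥ f - (lazyM P ^ (j+1)) *ᵥ f with hu
  have h2 := l2_bound hP h hpi.1 f j u hu
  have hff : wip pi f f ≤ 1 := by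
    rw [← hpi.2]
    refine Finset.sum_le_sum fun x _ => ?_
    have := hf x
    exact mul_le_of_le_one_right (hpi.1 x) (by nlinarith)
  have hcs : (∑ x, pi x * |u x|) ^ 2 ≤ wip pi u u := by
    have h := Finset.sum_mul_sq_le_sq_mul_sq Finset.univ (fun x => √(pi x))
      (fun x => √(pi x) * |u x|)
    simp only [mul_pow, Real.sq_sqrt (hpi.1 _), ← mul_assoc, Real.mul_self_sqrt (hpi.1 _),
      hpi.2, one_mul, sq_abs] at h
    refine h.trans (le_of_eq ?_)
    exact Finset.sum_congr rfl fun x _ => by ring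
  have hj : (0:ℝ) < (j:ℝ) + 1 := by positivity
  have : (∑ x, pi x * |u x|) ≤ 1 / ((j:ℝ) + 1) := by
    refine abs_le_of_sq_le_sq' ?_ (by positivity) |>.2
    rw [div_pow, one_pow, le_div_iff₀ (by positivity)]
    calc _ ≤ wip pi u u * (((j:ℝ)+1)^2) := by gcongr
      _ ≤ 1 := h2.trans hff
  simpa [hu] using this

theorem tv_ge {α β F : Ω → ℝ} (hs : ∑ x, α x = ∑ x, β x) (hF : ∀ x, 0 ≤ F x ∧ F x ≤ 1) :
    ∑ x, (α x - β x) * F x ≤ tvDist α β := by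
  have h0 : ∑ x, (α x - β x) = 0 := by rw [Finset.sum_sub_distrib, hs, sub_self]
  have : ∑ x, (α x - β x) * F x ≤ ∑ x, (|α x - β x| / 2 + (α x - β x) / 2) := by
    refine Finset.sum_le_sum fun x _ => ?_
    have := hF x
    rcases abs_cases (α x - β x) with ⟨h, h'⟩ | ⟨h, h'⟩ <;> rw [h] <;> nlinarith
  rw [Finset.sum_add_distrib, ← Finset.sum_div, ← Finset.sum_div, h0] at this
  unfold tvDist; linarith

theorem tv_eq {α β : Ω → ℝ} (hs : ∑ x, α x = ∑ x, β x) :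
    ∃ f : Ω → ℝ, (∀ x, 0 ≤ f x ∧ f x ≤ 1) ∧ tvDist α β = ∑ x, (α x - β x) * f x := by
  refine ⟨fun x => if β x ≤ α x then 1 else 0, fun x => by dsimp only; split_ifs <;> norm_num, ?_⟩
  have h0 : ∑ x, (α x - β x) = 0 := by rw [Finset.sum_sub_distrib, hs, sub_self]
  have : ∑ x, (α x - β x) * (if β x ≤ α x then 1 else 0)
      = ∑ x, (|α x - β x| / 2 + (α x - β x) / 2) := by
    refine Finset.sum_congr rfl fun x _ => ?_
    split_ifs with h
    · rw [abs_of_nonneg (by linarith)]; ring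
    · rw [abs_of_neg (by linarith)]; ring
  rw [this, Finset.sum_add_distrib, ← Finset.sum_div, ← Finset.sum_div, h0]
  unfold tvDist; ring

theorem mulVec_range {A : Matrix Ω Ω ℝ} (hA : IsStochastic A) {f : Ω → ℝ}
    (hf : ∀ x, 0 ≤ f x ∧ f x ≤ 1) (x : Ω) : 0 ≤ (A *ᵥ f) x ∧ (A *ᵥ f) x ≤ 1 := by
  simp only [Matrix.mulVec, dotProduct]
  refine ⟨Finset.sum_nonneg fun y _ => mul_nonneg (hA.1 _ _) (hf y).1, ?_⟩
  rw [← hA.2 x]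
  exact Finset.sum_le_sum fun y _ => mul_le_of_le_one_right (hA.1 _ _) (hf y).2

theorem prob_vecMul {A : Matrix Ω Ω ℝ} (hA : IsStochastic A) {μ : Ω → ℝ} (hμ : IsProbVec μ) :
    IsProbVec (μ ᵥ* A) := by
  refine ⟨fun y => ?_, ?_⟩
  · simp only [Matrix.vecMul, dotProduct]
    exact Finset.sum_nonneg fun x _ => mul_nonneg (hμ.1 _) (hA.1 _ _)
  · simp only [Matrix.vecMul, dotProduct]
    rw [Finset.sum_comm]
    simp only [← Finset.mul_sum, hA.2, mul_one, hμ.2]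

theorem hasSum_conv {f g : ℕ → ℝ} {a b : ℝ} (h : HasSum g b) (hf : ∀ k, f k = g k)
    (ha : a = b) : HasSum f a := by
  rw [funext hf, ha]; exact h

theorem poisson_sum (t θ : ℝ) :
    HasSum (fun k : ℕ => Real.exp (-t) * t ^ k / (Nat.factorial k) * Real.exp (θ * k))
      (Real.exp (t * (Real.exp θ - 1))) := by
  have h := (NormedSpace.expSeries_div_hasSum_exp (𝔸 := ℝ) (t * Real.exp θ)).mul_left (Real.exp (-t))
  rw [← Real.exp_eq_exp_ℝ, ← Real.exp_add] at h
  refine hasSum_conv h (fun k => ?_) ?_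
  · rw [mul_pow, ← Real.exp_nat_mul, mul_comm (k:ℝ) θ]; ring
  · congr 1; ring

section MatExp
open scoped Matrix.Norms.Operator

theorem matexp_hasSum (A : Matrix Ω Ω ℝ) (t : ℝ) (μ : Ω → ℝ) (y : Ω) :
    HasSum (fun k : ℕ => t ^ k / (Nat.factorial k) * (μ ᵥ* (A ^ k)) y)
      ((μ ᵥ* NormedSpace.exp (t • A)) y) := by
  have h := NormedSpace.exp_series_hasSum_exp' (𝕂 := ℝ) (t • A)
  have hc : Continuous (fun M : Matrix Ω Ω ℝ => (μ ᵥ* M) y) := by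
    simp only [Matrix.vecMul, dotProduct]
    fun_prop
  let φ : Matrix Ω Ω ℝ →+ ℝ :=
    { toFun := fun M => (μ ᵥ* M) y
      map_zero' := by simp
      map_add' := fun A B => by simp [Matrix.vecMul_add] }
  have h2 := h.map φ hc
  refine hasSum_conv h2 (fun k => ?_) rfl
  simp only [Function.comp, φ, AddMonoidHom.coe_mk, ZeroHom.coe_mk, smul_pow, Matrix.vecMul_smul,
    Pi.smul_apply, smul_eq_mul]
  ring

theorem exp_lazy (P : Matrix Ω Ω ℝ) (t : ℝ) :
    NormedSpace.exp (t • lazyM P) = Real.exp (t/2) • NormedSpace.exp ((t/2) • P) := by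
  have e : t • lazyM P = (t/2) • (1 : Matrix Ω Ω ℝ) + (t/2) • P := by
    rw [lazyM, smul_smul, smul_add, div_eq_mul_inv]
  rw [e, Matrix.exp_add_of_commute]
  · have : NormedSpace.exp ((t/2) • (1 : Matrix Ω Ω ℝ)) = Real.exp (t/2) • 1 := by
      rw [← Algebra.algebraMap_eq_smul_one, ← Algebra.algebraMap_eq_smul_one, Real.exp_eq_exp_ℝ]
      exact (NormedSpace.algebraMap_exp_comm (t/2)).symm
    rw [this, smul_mul_assoc, one_mul]
  · exact ((Commute.one_left _).smul_left _).smul_right _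

theorem cont_hasSum (P : Matrix Ω Ω ℝ) (t : ℝ) (μ : Ω → ℝ) (y : Ω) :
    HasSum (fun k : ℕ => Real.exp (-t) * t ^ k / (Nat.factorial k) * (μ ᵥ* (lazyM P ^ k)) y)
      (∑' k : ℕ, Real.exp (-(t/2)) * (t/2) ^ k / (Nat.factorial k) * (μ ᵥ* (P ^ k)) y) := by
  have h1 := (matexp_hasSum P (t/2) μ y).mul_left (Real.exp (-(t/2)))
  have h2 := (matexp_hasSum (lazyM P) t μ y).mul_left (Real.exp (-t))
  rw [exp_lazy, Matrix.vecMul_smul, Pi.smul_apply, smul_eq_mul, ← mul_assoc, ← Real.exp_add,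
    show -t + t/2 = -(t/2) by ring, ← h1.tsum_eq] at h2
  refine hasSum_conv h2 (fun k => ?_) ?_
  · ring
  · congr 1; ext k; ring

end MatExp

theorem pow_diff_le (p : ℕ → ℝ) (m R : ℕ) (hR : R ≤ m) (i : ℕ) (h1 : m - R ≤ i) (h2 : i ≤ m + R) :
    p i ≤ p m + ∑ j ∈ Finset.Ico (m - R) (m + R), |p j - p (j+1)| := by
  rcases le_total i m with h | h
  · have e : p i - p m = ∑ j ∈ Finset.Ico i m, (p j - p (j+1)) := by
      rw [← neg_sub (p m), ← Finset.sum_Ico_sub p h, ← Finset.sum_neg_distrib]; simp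
    have : ∑ j ∈ Finset.Ico i m, (p j - p (j+1)) ≤ ∑ j ∈ Finset.Ico i m, |p j - p (j+1)| :=
      Finset.sum_le_sum fun j _ => le_abs_self _
    have : ∑ j ∈ Finset.Ico i m, |p j - p (j+1)|
        ≤ ∑ j ∈ Finset.Ico (m - R) (m + R), |p j - p (j+1)| :=
      Finset.sum_le_sum_of_subset_of_nonneg (Finset.Ico_subset_Ico h1 (by omega))
        fun _ _ _ => abs_nonneg _
    linarith
  · have e : p i - p m = ∑ j ∈ Finset.Ico m i, (p (j+1) - p j) := by
      rw [← Finset.sum_Ico_sub p h]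
    have : ∑ j ∈ Finset.Ico m i, (p (j+1) - p j) ≤ ∑ j ∈ Finset.Ico m i, |p j - p (j+1)| :=
      Finset.sum_le_sum fun j _ => by rw [abs_sub_comm]; exact le_abs_self _
    have : ∑ j ∈ Finset.Ico m i, |p j - p (j+1)|
        ≤ ∑ j ∈ Finset.Ico (m - R) (m + R), |p j - p (j+1)| :=
      Finset.sum_le_sum_of_subset_of_nonneg (Finset.Ico_subset_Ico (by omega) h2)
        fun _ _ _ => abs_nonneg _
    linarith

theorem pi_pow {Q : Matrix Ω Ω ℝ} {pi : Ω → ℝ} (h : pi ᵥ* Q = pi) (n : ℕ) : pi ᵥ* (Q ^ n) = pi := by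
  induction n with
  | zero => simp
  | succ n ih => rw [pow_succ, ← Matrix.vecMul_vecMul, ih, h]

/-- Core inequality with integer parameters. -/
theorem core {P : Matrix Ω Ω ℝ} {pi : Ω → ℝ} (hP : IsStochastic P)
    (h : IsReversible P pi) (hpi : IsProbVec pi) (hst : pi ᵥ* P = pi) {μ : Ω → ℝ}
    (hμ : IsProbVec μ) (t a θ : ℝ) (ht : 0 ≤ t) (hθ : 0 ≤ θ) (hθ1 : θ ≤ 1) (n m R : ℕ)
    (hR : R < m)
    (hgood : ∀ k : ℕ, |(k:ℝ) - t| ≤ a → k ≤ n + R ∧ n ≤ k + R) :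
    tvDist (μ ᵥ* (lazyM P ^ (n + m))) pi ≤ contDist P pi (t/2) μ
      + 2 * R / (m - R) + 2 * Real.exp (t * θ^2 - θ * a) := by
  set Q := lazyM P with hQ
  have hQs : IsStochastic Q := stoch_lazy hP
  have hQst : pi ᵥ* Q = pi := by
    rw [hQ, lazyM, Matrix.vecMul_smul, Matrix.vecMul_add, Matrix.vecMul_one, hst]
    ext x; simp only [Pi.smul_apply, Pi.add_apply, smul_eq_mul]; ring
  have hμT := prob_vecMul (stoch_pow hQs (n+m)) hμ
  obtain ⟨f, hf, htv⟩ := tv_eq (hμT.2.trans hpi.2.symm)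
  rw [htv]
  set g : Ω → ℝ := fun x => ∑ j ∈ Finset.Ico (m - R) (m + R),
    |((Q ^ j) *ᵥ f) x - ((Q ^ (j+1)) *ᵥ f) x| with hg
  have hg0 : ∀ x, 0 ≤ g x := fun x => Finset.sum_nonneg fun _ _ => abs_nonneg _
  set F : Ω → ℝ := fun x => min 1 (((Q ^ m) *ᵥ f) x + g x) with hF
  have hF01 : ∀ x, 0 ≤ F x ∧ F x ≤ 1 := fun x =>
    ⟨le_min zero_le_one (add_nonneg (mulVec_range (stoch_pow hQs m) hf x).1 (hg0 x)), min_le_left _ _⟩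
  -- the stationary mean of g
  have hpg : ∑ x, pi x * g x ≤ 2 * R / (m - R) := by
    have hmR : (0:ℝ) < m - R := by
      have : (R:ℝ) < m := by exact_mod_cast hR
      linarith
    simp only [hg, Finset.mul_sum]
    rw [Finset.sum_comm]
    calc _ ≤ ∑ j ∈ Finset.Ico (m - R) (m + R), 1 / ((m:ℝ) - R) := by
          refine Finset.sum_le_sum fun j hj => (l1_bound hP h hpi f hf j).trans ?_
          refine one_div_le_one_div_of_le hmR ?_
          have h1 := (Finset.mem_Ico.1 hj).1
          have : m ≤ j + R := by omega
          have : (m:ℝ) ≤ j + R := by exact_mod_cast this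
          linarith
      _ = _ := by
          rw [Finset.sum_const, Nat.card_Ico, nsmul_eq_mul, show m + R - (m - R) = 2 * R by omega]
          push_cast; ring
  have hpm : ∑ x, pi x * ((Q ^ m) *ᵥ f) x = ∑ x, pi x * f x := by
    have := Matrix.dotProduct_mulVec pi (Q ^ m) f
    rw [pi_pow hQst] at this
    simpa [dotProduct] using this
  have hpF : ∑ x, pi x * F x ≤ ∑ x, pi x * f x + 2 * R / (m - R) := by
    calc _ ≤ ∑ x, pi x * (((Q ^ m) *ᵥ f) x + g x) :=
          Finset.sum_le_sum fun x _ => mul_le_mul_of_nonneg_left (min_le_right _ _) (hpi.1 x)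
      _ ≤ _ := by
          simp only [mul_add, Finset.sum_add_distrib]; rw [hpm]; linarith
  set w : ℕ → ℝ := fun k => Real.exp (-t) * t ^ k / (Nat.factorial k) with hw
  have hw0 : ∀ k, 0 ≤ w k := fun k => by simp only [hw]; positivity
  set ν : Ω → ℝ := fun y => ∑' k : ℕ, Real.exp (-(t/2)) * (t/2) ^ k / (Nat.factorial k) * (μ ᵥ* (P ^ k)) y
    with hν
  have hνs : ∀ y, HasSum (fun k => w k * (μ ᵥ* (Q ^ k)) y) (ν y) := fun y => cont_hasSum P t μ y
  have hw1 : HasSum w 1 := by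
    have := poisson_sum t 0
    simpa using this
  have hν1 : ∑ y, ν y = 1 := by
    have h1 := hasSum_sum (s := Finset.univ) fun y _ => hνs y
    simp only [← Finset.mul_sum, (prob_vecMul (stoch_pow hQs _) hμ).2, mul_one] at h1
    exact h1.unique hw1
  have hνF : HasSum (fun k => w k * ∑ y, (μ ᵥ* (Q ^ k)) y * F y) (∑ y, ν y * F y) := by
    have h1 := hasSum_sum (s := Finset.univ) fun y _ => (hνs y).mul_right (F y)
    refine hasSum_conv h1 (fun k => ?_) rfl
    rw [Finset.mul_sum]; exact Finset.sum_congr rfl fun y _ => by ring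
  set L := ∑ x, (μ ᵥ* (Q ^ (n+m))) x * f x with hL
  have hLk : ∀ k : ℕ, k ≤ n + m →
      L = ∑ x, (μ ᵥ* (Q ^ k)) x * ((Q ^ (n + m - k)) *ᵥ f) x := by
    intro k hk
    have h1 := Matrix.dotProduct_mulVec (μ ᵥ* (Q ^ k)) (Q ^ (n + m - k)) f
    rw [Matrix.vecMul_vecMul, ← pow_add, show k + (n + m - k) = n + m by omega] at h1
    simp only [dotProduct] at h1
    exact h1.symm
  have hL1 : L ≤ 1 := by
    rw [← hμT.2]
    exact Finset.sum_le_sum fun x _ => mul_le_of_le_one_right (hμT.1 x) (hf x).2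
  have hpt : ∀ k : ℕ, L ≤ ∑ y, (μ ᵥ* (Q ^ k)) y * F y
      + (Real.exp (-(θ * t) - θ * a) * Real.exp (θ * k)
        + Real.exp (θ * t - θ * a) * Real.exp (-θ * k)) := by
    intro k
    have hk := prob_vecMul (stoch_pow hQs k) hμ
    by_cases hkg : |(k:ℝ) - t| ≤ a
    · obtain ⟨g1, g2⟩ := hgood k hkg
      rw [hLk k (by omega)]
      have : ∑ x, (μ ᵥ* (Q ^ k)) x * ((Q ^ (n + m - k)) *ᵥ f) x ≤ ∑ y, (μ ᵥ* (Q ^ k)) y * F y := by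
        refine Finset.sum_le_sum fun x _ => mul_le_mul_of_nonneg_left (le_min ?_ ?_) (hk.1 x)
        · exact (mulVec_range (stoch_pow hQs _) hf x).2
        · exact pow_diff_le (fun j => ((Q ^ j) *ᵥ f) x) m R hR.le (n + m - k) (by omega) (by omega)
      have := Real.exp_pos (-(θ * t) - θ * a)
      have := Real.exp_pos (θ * t - θ * a)
      have := Real.exp_pos (θ * k)
      have := Real.exp_pos (-θ * k)
      have : 0 ≤ Real.exp (-(θ * t) - θ * a) * Real.exp (θ * k)
        + Real.exp (θ * t - θ * a) * Real.exp (-θ * k) := by positivity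
      linarith
    · push Not at hkg
      have h0 : 0 ≤ ∑ y, (μ ᵥ* (Q ^ k)) y * F y :=
        Finset.sum_nonneg fun y _ => mul_nonneg (hk.1 y) (hF01 y).1
      rw [← Real.exp_add, ← Real.exp_add]
      have p1 := Real.exp_pos (-(θ * t) - θ * a + θ * k)
      have p2 := Real.exp_pos (θ * t - θ * a + -θ * k)
      rcases lt_abs.1 hkg with hh | hh
      · have : 1 ≤ Real.exp (-(θ * t) - θ * a + θ * k) := Real.one_le_exp (by nlinarith)
        linarith
      · have : 1 ≤ Real.exp (θ * t - θ * a + -θ * k) := Real.one_le_exp (by nlinarith)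
        linarith
  have hsumL : HasSum (fun k => w k * L) L := by simpa using hw1.mul_right L
  have hsumR := hνF.add (((poisson_sum t θ).mul_left (Real.exp (-(θ * t) - θ * a))).add
    ((poisson_sum t (-θ)).mul_left (Real.exp (θ * t - θ * a))))
  have hmain := hasSum_le (fun k => by
    have := mul_le_mul_of_nonneg_left (hpt k) (hw0 k)
    refine this.trans (le_of_eq ?_)
    simp only [hw]; ring) hsumL hsumR
  rw [← Real.exp_add, ← Real.exp_add] at hmain
  have hexp : ∀ z : ℝ, |z| ≤ 1 → Real.exp z - 1 - z ≤ z^2 := fun z hz =>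
    (le_abs_self _).trans (by simpa using Real.abs_exp_sub_one_sub_id_le hz)
  have q1 : Real.exp (-(θ * t) - θ * a + t * (Real.exp θ - 1)) ≤ Real.exp (t * θ^2 - θ * a) := by
    have := hexp θ (by rwa [abs_of_nonneg hθ])
    apply Real.exp_le_exp.2; nlinarith
  have q2 : Real.exp (θ * t - θ * a + t * (Real.exp (-θ) - 1)) ≤ Real.exp (t * θ^2 - θ * a) := by
    have := hexp (-θ) (by rwa [abs_neg, abs_of_nonneg hθ])
    apply Real.exp_le_exp.2; nlinarith
  have htvF : ∑ x, (ν x - pi x) * F x ≤ contDist P pi (t/2) μ :=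
    tv_ge (hν1.trans hpi.2.symm) hF01
  simp only [sub_mul, Finset.sum_sub_distrib] at htvF ⊢
  linarith

end Helpers

/-- **Proposition 1.6 (eq. (8)) of Hermon–Peres.**
There is an absolute constant `C` such that for every finite irreducible reversible Markov
chain, every initial distribution `μ`, every `t ≥ 2` and every `2 ≤ s ≤ e^t`,
`d_L(t + ⌈s√t⌉, μ) ≤ d_c(t/2, μ) + C s⁻¹ √(log s)`. -/
theorem lazy_dist_le_cont_dist_explicit :
    ∃ C : ℝ, 0 < C ∧
      ∀ (Ω : Type) [Fintype Ω] [DecidableEq Ω]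
        (P : Matrix Ω Ω ℝ) (pi : Ω → ℝ), IsRevMC P pi →
        ∀ μ : Ω → ℝ, IsProbVec μ →
        ∀ t s : ℝ, 2 ≤ t → 2 ≤ s → s ≤ Real.exp t →
          lazyDist P pi (t + ((⌈s * Real.sqrt t⌉ : ℤ) : ℝ)) μ ≤
            contDist P pi (t / 2) μ + C * s⁻¹ * Real.sqrt (Real.log s) := by
  refine ⟨20, by norm_num, ?_⟩
  intro Ω _ _ P pi hM μ hμ t s ht hs hst
  obtain ⟨⟨hP, -, hpi, hstat⟩, hrev⟩ := hM
  set r := Real.sqrt (Real.log s) with hr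
  have hlog2 : 0.69 < Real.log 2 := by have := Real.log_two_gt_d9; linarith
  have hlogs : Real.log 2 ≤ Real.log s := Real.log_le_log (by norm_num) hs
  have hlogt : Real.log s ≤ t := by
    rw [← Real.log_exp t]; exact Real.log_le_log (by linarith) hst
  have hr2 : r ^ 2 = Real.log s := Real.sq_sqrt (by linarith)
  have hr0 : 0 ≤ r := Real.sqrt_nonneg _
  have hr8 : 0.83 ≤ r := by nlinarith
  set q := Real.sqrt t with hq
  have hq2 : q ^ 2 = t := Real.sq_sqrt (by linarith)
  have hq0 : 0 ≤ q := Real.sqrt_nonneg _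
  have hq1 : 1.4 ≤ q := by nlinarith
  have hrq : r ≤ q := Real.sqrt_le_sqrt hlogt
  have hs0 : 0 < s := by linarith
  set m := ⌈s * q⌉₊ with hm
  set n := ⌊t⌋₊ with hn
  have hfl : ⌊t + ((⌈s * q⌉ : ℤ) : ℝ)⌋₊ = n + m := by
    have : ((⌈s * q⌉ : ℤ) : ℝ) = (m : ℝ) := by
      rw [hm, natCast_ceil_eq_intCast_ceil (by positivity)]
    rw [this, Nat.floor_add_natCast (by linarith)]
  have hlazy : lazyDist P pi (t + ((⌈s * q⌉ : ℤ) : ℝ)) μ = tvDist (μ ᵥ* (lazyM P ^ (n + m))) pi := by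
    rw [lazyDist, hfl]
  rw [hlazy]
  by_cases hcase : s < 8 * r
  · have hμT := prob_vecMul (stoch_pow (stoch_lazy hP) (n+m)) hμ
    have h1 : tvDist (μ ᵥ* (lazyM P ^ (n + m))) pi ≤ 1 := by
      obtain ⟨f, hf, he⟩ := tv_eq (hμT.2.trans hpi.2.symm)
      rw [he, ← hμT.2]
      refine Finset.sum_le_sum fun x _ => ?_
      have := hf x
      have := hμT.1 x
      have := hpi.1 x
      nlinarith [mul_nonneg (hpi.1 x) (hf x).1, mul_le_of_le_one_right (hμT.1 x) (hf x).2]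
    have h2 : 0 ≤ contDist P pi (t/2) μ := by
      unfold contDist tvDist
      exact div_nonneg (Finset.sum_nonneg fun _ _ => abs_nonneg _) (by norm_num)
    have h3 : 1 ≤ 20 * s⁻¹ * r := by
      rw [mul_assoc, mul_comm s⁻¹, ← div_eq_mul_inv, ← mul_div_assoc, le_div_iff₀ hs0]; linarith
    linarith
  · push Not at hcase
    set a := 2 * r * q with ha
    set R := ⌊a⌋₊ + 1 with hR
    have ha0 : 0 ≤ a := by positivity
    have hRle : (R:ℝ) ≤ a + 1 := by
      have := Nat.floor_le ha0
      rw [hR]; push_cast; linarith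
    have hrq1 : 1 ≤ r * q := by nlinarith
    have hR3 : (R:ℝ) ≤ 3 * (r * q) := by linarith
    have hmle : s * q ≤ m := Nat.le_ceil _
    have hsq : 8 * (r * q) ≤ s * q := by nlinarith
    have hRm : R < m := by
      have : (R:ℝ) < m := by linarith
      exact_mod_cast this
    have hc := core hP hrev hpi hstat hμ t a (r / q) (by linarith) (by positivity)
      (by rw [div_le_one (by linarith)]; exact hrq) n m R hRm (by
        intro k hk
        obtain ⟨k1, k2⟩ := abs_le.1 hk
        have n1 : (n:ℝ) ≤ t := Nat.floor_le (by linarith)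
        have n2 : t < n + 1 := Nat.lt_floor_add_one t
        have a2 : a < ⌊a⌋₊ + 1 := Nat.lt_floor_add_one a
        constructor
        · have : (k:ℝ) < ((n + R + 1 : ℕ) : ℝ) := by rw [hR]; push_cast; linarith
          have : k < n + R + 1 := by exact_mod_cast this
          omega
        · have : (n:ℝ) < ((k + R : ℕ) : ℝ) := by rw [hR]; push_cast; linarith
          have : n < k + R := by exact_mod_cast this
          omega)
    have hexp : Real.exp (t * (r/q)^2 - r / q * a) = s⁻¹ := by
      have : t * (r/q)^2 - r / q * a = - Real.log s := by
        rw [← hr2, ← hq2, ha]; field_simp; ring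
      rw [this, Real.exp_neg, Real.exp_log hs0]
    rw [hexp] at hc
    have h1 : 2 * (R:ℝ) / (m - R) ≤ 12 * s⁻¹ * r := by
      have hh : s * q / 2 ≤ (m:ℝ) - R := by linarith
      calc 2 * (R:ℝ) / (m - R) ≤ 2 * (3 * (r * q)) / (s * q / 2) := by gcongr
        _ = 12 * s⁻¹ * r := by field_simp; norm_num
    have h2 : 2 * s⁻¹ ≤ 8 * s⁻¹ * r := by
      have : 0 < s⁻¹ := by positivity
      nlinarith
    linarith
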